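/- Let A and B be n×n positive definite complex matrices. Then −Tr[A · log((A^{−1} ♯ B)^2)] ≤ S(A|B) ≤ −Tr[A · log(A^{−1/2} B A^{−1/2})], where S(A|B) := Tr(A log A − A log B) is the Umegaki relative entropy. -/

import Mathlib

noncomputable section

open Matrix
open scoped ComplexOrder

variable {n : ℕ}

/-- Real power of a matrix, via the (Hermitian) continuous functional calculus,
i.e. via diagonalization for Hermitian matrices. -/
def mPow (A : Matrix (Fin n) (Fin n) ℂ) (t : ℝ) : Matrix (Fin n) (Fin n) ℂ :=
  cfc (fun x : ℝ => x ^ t) A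

/-- The logarithm of a matrix, via diagonalization for Hermitian matrices. -/
def mLog (A : Matrix (Fin n) (Fin n) ℂ) : Matrix (Fin n) (Fin n) ℂ :=
  cfc Real.log A

/-- The weighted geometric mean `A ♯ₜ B = A^(1/2) (A^(-1/2) B A^(-1/2))^t A^(1/2)`. -/
def mGeo (A B : Matrix (Fin n) (Fin n) ℂ) (t : ℝ) : Matrix (Fin n) (Fin n) ℂ :=
  mPow A (1/2) * mPow (mPow A (-(1/2)) * B * mPow A (-(1/2))) t * mPow A (1/2)

/-- The weighted spectral geometric mean `A spₜ B = (A⁻¹ ♯ B)^t A (A⁻¹ ♯ B)^t`,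
where `A ♯ B` is the (unweighted, `t = 1/2`) geometric mean. -/
def mSp (A B : Matrix (Fin n) (Fin n) ℂ) (t : ℝ) : Matrix (Fin n) (Fin n) ℂ :=
  mPow (mGeo A⁻¹ B (1/2)) t * A * mPow (mGeo A⁻¹ B (1/2)) t

/-- The eigenvalues of a Hermitian matrix, listed in decreasing order
(junk value `0` for non-Hermitian matrices). -/
def eigsDec (A : Matrix (Fin n) (Fin n) ℂ) : Fin n → ℝ :=
  if hA : A.IsHermitian then
    fun j => (hA.eigenvalues ∘ Tuple.sort hA.eigenvalues) j.rev
  else 0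

/-- Log-majorization `X ≺_log Y`: the products of the `k` largest eigenvalues satisfy
`∏_{j=1}^k λ_j(X) ≤ ∏_{j=1}^k λ_j(Y)` for `k = 1, …, n-1`, and `det X = det Y`. -/
def LogMaj (X Y : Matrix (Fin n) (Fin n) ℂ) : Prop :=
  (∀ k : ℕ, k ≤ n - 1 →
      ∏ j ∈ Finset.univ.filter (fun j : Fin n => (j : ℕ) < k), eigsDec X j ≤
        ∏ j ∈ Finset.univ.filter (fun j : Fin n => (j : ℕ) < k), eigsDec Y j) ∧
    X.det = Y.det

/-!
With `C = A^(-1/2) B A^(-1/2)` and `G = A⁻¹ ♯ B`, each of `Tr A log C`, `-S(A|B)` and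
`Tr A log G²` is a finite sum `∑ wᵢ log rᵢ` with weights of total mass `Tr A`, the middle one being
over the ratios `βⱼ / αᵢ` of eigenvalues of `B` and `A` (the spectrum of the relative modular
operator). For such sums an inequality between the Stieltjes transforms `∑ wᵢ / (rᵢ + t)`, for all
`t > 0`, integrates to the reverse inequality between the logarithmic sums.

The three transforms compare by a variational argument. The middle one is the maximum over `Y` of a
concave quadratic form, attained where `Y B + t A Y = A`. The choice `Y = (G² + t)⁻¹` has the value
`Tr A (G² + t)⁻¹`, because `G A G = B`, while completing two squares bounds the form by
`Tr A (C + t)⁻¹` for every `Y`. The latter only needs a factorization `A = K Kᴴ`, `B = K C Kᴴ`, with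
the weight `Kᴴ K` in place of `A`.
-/

open Filter Topology RCLike

section ScalarLog

lemma tendsto_log_add_sub_log_atTop (c : ℝ) :
    Tendsto (fun t : ℝ => Real.log (c + t) - Real.log t) atTop (𝓝 0) := by
  have h_ratio : Tendsto (fun t : ℝ => c / t + 1) atTop (𝓝 1) := by
    simpa using (tendsto_const_nhds.div_atTop tendsto_id).add_const (1 : ℝ)
  have h_log := h_ratio.log one_ne_zero
  rw [Real.log_one] at h_log
  refine h_log.congr' ?_
  filter_upwards [eventually_gt_atTop 0, eventually_gt_atTop (-c)] with t ht hct
  rw [← Real.log_div (by linarith) ht.ne', add_div, div_self ht.ne']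

variable {ι κ : Type*} [Fintype ι] [Fintype κ]

lemma hasDerivAt_sum_mul_log_add (w r : ι → ℝ) {t : ℝ} (hr : ∀ i, r i + t ≠ 0) :
    HasDerivAt (fun s => ∑ i, w i * Real.log (r i + s)) (∑ i, w i / (r i + t)) t := by
  refine HasDerivAt.fun_sum fun i _ => ?_
  simpa [div_eq_mul_inv] using (((hasDerivAt_id t).const_add (r i)).log (hr i)).const_mul (w i)

lemma tendsto_sum_mul_log_add_sub_atTop (w r : ι → ℝ) :
    Tendsto (fun t => ∑ i, w i * Real.log (r i + t) - (∑ i, w i) * Real.log t) atTop (𝓝 0) := by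
  have h_terms : Tendsto (fun t => ∑ i, w i * (Real.log (r i + t) - Real.log t)) atTop (𝓝 0) := by
    simpa using tendsto_finsetSum Finset.univ fun i _ =>
      (tendsto_log_add_sub_log_atTop (r i)).const_mul (w i)
  simpa only [mul_sub, Finset.sum_sub_distrib, ← Finset.sum_mul] using h_terms

/-- The difference `φ t` of the two sides with every `log r` replaced by `log (r + t)` is
nondecreasing, its derivative being the difference of Stieltjes transforms, and tends to `0` at
infinity because the total masses agree; hence `φ 0 ≤ 0`. -/
theorem sum_mul_log_le_of_sum_div_add_le {w r : ι → ℝ} {w' r' : κ → ℝ}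
    (hr : ∀ i, 0 < r i) (hr' : ∀ k, 0 < r' k) (h_mass : ∑ i, w i = ∑ k, w' k)
    (h_stieltjes : ∀ t, 0 < t → ∑ i, w i / (r i + t) ≤ ∑ k, w' k / (r' k + t)) :
    ∑ k, w' k * Real.log (r' k) ≤ ∑ i, w i * Real.log (r i) := by
  set φ : ℝ → ℝ := fun t => ∑ k, w' k * Real.log (r' k + t) - ∑ i, w i * Real.log (r i + t)
    with hφ
  have h_deriv {t : ℝ} (ht : 0 ≤ t) :
      HasDerivAt φ (∑ k, w' k / (r' k + t) - ∑ i, w i / (r i + t)) t :=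
    (hasDerivAt_sum_mul_log_add w' r' fun k => (add_pos_of_pos_of_nonneg (hr' k) ht).ne').sub
      (hasDerivAt_sum_mul_log_add w r fun i => (add_pos_of_pos_of_nonneg (hr i) ht).ne')
  have h_mono : MonotoneOn φ (Set.Ici 0) := by
    refine monotoneOn_of_hasDerivWithinAt_nonneg (convex_Ici 0)
      (fun t ht => (h_deriv ht).continuousAt.continuousWithinAt)
      (fun t ht => (h_deriv (interior_subset ht)).hasDerivWithinAt) fun t ht => ?_
    rw [interior_Ici] at ht
    exact sub_nonneg.2 (h_stieltjes t ht)
  have h_lim : Tendsto φ atTop (𝓝 0) := by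
    simpa [hφ, h_mass] using
      (tendsto_sum_mul_log_add_sub_atTop w' r').sub (tendsto_sum_mul_log_add_sub_atTop w r)
  have h_zero : φ 0 ≤ 0 := by
    refine ge_of_tendsto h_lim ?_
    filter_upwards [eventually_ge_atTop 0] with t ht
    exact h_mono Set.self_mem_Ici ht ht
  simpa [hφ] using h_zero

end ScalarLog

section DoubleOperatorIntegral

variable {ι 𝕜 : Type*} [Fintype ι] [DecidableEq ι] [RCLike 𝕜] {A B M : Matrix ι ι 𝕜}

lemma cfc_eq_eigenvectorUnitary_mul (hA : A.IsHermitian) (f : ℝ → ℝ) :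
    cfc f A = (hA.eigenvectorUnitary : Matrix ι ι 𝕜) *
      diagonal (fun i => (f (hA.eigenvalues i) : 𝕜)) * (hA.eigenvectorUnitary : Matrix ι ι 𝕜)ᴴ :=
  hA.cfc_eq f

/-- The matrix `⟨uᵢ, vⱼ⟩` of inner products of the eigenvectors `uᵢ` of `A` and `vⱼ` of `B`. -/
def eigenbasisChange (hA : A.IsHermitian) (hB : B.IsHermitian) : Matrix ι ι 𝕜 :=
  (hA.eigenvectorUnitary : Matrix ι ι 𝕜)ᴴ * hB.eigenvectorUnitary

/-- The squared moduli `|⟨uᵢ, vⱼ⟩|²` of the inner products of the eigenvectors of `A` and `B`,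
through which traces are expressed. Indexed by pairs, so as to serve as a family of weights. -/
def eigenOverlap (hA : A.IsHermitian) (hB : B.IsHermitian) (p : ι × ι) : ℝ :=
  ‖eigenbasisChange hA hB p.1 p.2‖ ^ 2

/-- The finite-dimensional double operator integral `∑ᵢⱼ F(αᵢ, βⱼ) Pᵢ Qⱼ`, where `A = ∑ᵢ αᵢ Pᵢ` and
`B = ∑ⱼ βⱼ Qⱼ` are spectral decompositions: it lets a function of the two noncommuting matrices be
computed with as if they were numbers, functions of `A` acting on the left and of `B` on the
right. -/
def doubleOpIntegral (hA : A.IsHermitian) (hB : B.IsHermitian) (F : ℝ → ℝ → ℝ) : Matrix ι ι 𝕜 :=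
  (hA.eigenvectorUnitary : Matrix ι ι 𝕜) *
    of (fun i j => (F (hA.eigenvalues i) (hB.eigenvalues j) : 𝕜) * eigenbasisChange hA hB i j) *
    (hB.eigenvectorUnitary : Matrix ι ι 𝕜)ᴴ

lemma doubleOpIntegral_congr (hA : A.IsHermitian) (hB : B.IsHermitian) {F F' : ℝ → ℝ → ℝ}
    (h : ∀ i j, F (hA.eigenvalues i) (hB.eigenvalues j) =
      F' (hA.eigenvalues i) (hB.eigenvalues j)) :
    doubleOpIntegral hA hB F = doubleOpIntegral hA hB F' := by
  simp only [doubleOpIntegral, h]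

lemma doubleOpIntegral_one (hA : A.IsHermitian) (hB : B.IsHermitian) :
    doubleOpIntegral hA hB (fun _ _ => 1) = 1 := by
  have hU : (hA.eigenvectorUnitary : Matrix ι ι 𝕜) * (hA.eigenvectorUnitary : Matrix ι ι 𝕜)ᴴ = 1 :=
    Unitary.coe_mul_star_self _
  have hV : (hB.eigenvectorUnitary : Matrix ι ι 𝕜) * (hB.eigenvectorUnitary : Matrix ι ι 𝕜)ᴴ = 1 :=
    Unitary.coe_mul_star_self _
  simp only [doubleOpIntegral, ofReal_one, one_mul]
  change _ * eigenbasisChange hA hB * _ = 1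
  rw [eigenbasisChange, ← mul_assoc, hU, one_mul, hV]

lemma doubleOpIntegral_add (hA : A.IsHermitian) (hB : B.IsHermitian) (F F' : ℝ → ℝ → ℝ) :
    doubleOpIntegral hA hB (fun x y => F x y + F' x y) =
      doubleOpIntegral hA hB F + doubleOpIntegral hA hB F' := by
  simp only [doubleOpIntegral, ← add_mul, ← mul_add]
  congr 2
  ext i j
  simp only [of_apply, Matrix.add_apply, ofReal_add, add_mul]

lemma doubleOpIntegral_const_mul (hA : A.IsHermitian) (hB : B.IsHermitian) (t : ℝ)
    (F : ℝ → ℝ → ℝ) :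
    doubleOpIntegral hA hB (fun x y => t * F x y) = t • doubleOpIntegral hA hB F := by
  rw [doubleOpIntegral, doubleOpIntegral, ← Matrix.smul_mul, ← Matrix.mul_smul]
  congr 2
  ext i j
  simp only [of_apply, Matrix.smul_apply, ofReal_mul, mul_assoc, real_smul_eq_coe_mul]

lemma cfc_mul_doubleOpIntegral (hA : A.IsHermitian) (hB : B.IsHermitian) (f : ℝ → ℝ)
    (F : ℝ → ℝ → ℝ) :
    cfc f A * doubleOpIntegral hA hB F = doubleOpIntegral hA hB (fun x y => f x * F x y) := by
  have hU : (hA.eigenvectorUnitary : Matrix ι ι 𝕜)ᴴ * (hA.eigenvectorUnitary : Matrix ι ι 𝕜) = 1 :=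
    Unitary.coe_star_mul_self _
  rw [cfc_eq_eigenvectorUnitary_mul hA, doubleOpIntegral, doubleOpIntegral]
  simp only [mul_assoc]
  rw [← mul_assoc _ᴴ, hU, one_mul, ← mul_assoc (diagonal _)]
  congr 2
  ext i j
  simp only [diagonal_mul, of_apply, ofReal_mul, mul_assoc]

lemma doubleOpIntegral_mul_cfc (hA : A.IsHermitian) (hB : B.IsHermitian) (F : ℝ → ℝ → ℝ)
    (g : ℝ → ℝ) :
    doubleOpIntegral hA hB F * cfc g B = doubleOpIntegral hA hB (fun x y => F x y * g y) := by
  have hV : (hB.eigenvectorUnitary : Matrix ι ι 𝕜)ᴴ * (hB.eigenvectorUnitary : Matrix ι ι 𝕜) = 1 :=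
    Unitary.coe_star_mul_self _
  rw [cfc_eq_eigenvectorUnitary_mul hB, doubleOpIntegral, doubleOpIntegral]
  simp only [mul_assoc]
  rw [← mul_assoc _ᴴ, hV, one_mul, ← mul_assoc (of _)]
  congr 2
  ext i j
  simp only [mul_diagonal, of_apply, ofReal_mul, mul_right_comm]

theorem trace_doubleOpIntegral (hA : A.IsHermitian) (hB : B.IsHermitian) (F : ℝ → ℝ → ℝ) :
    (doubleOpIntegral hA hB F).trace = ((∑ p : ι × ι,
      F (hA.eigenvalues p.1) (hB.eigenvalues p.2) * eigenOverlap hA hB p : ℝ) : 𝕜) := by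
  have h_adjoint : (hB.eigenvectorUnitary : Matrix ι ι 𝕜)ᴴ * hA.eigenvectorUnitary =
      (eigenbasisChange hA hB)ᴴ := by
    rw [eigenbasisChange, conjTranspose_mul, conjTranspose_conjTranspose]
  rw [doubleOpIntegral, trace_mul_comm, ← mul_assoc, h_adjoint, trace_mul_comm, Matrix.trace,
    Fintype.sum_prod_type, ofReal_sum]
  refine Finset.sum_congr rfl fun i _ => ?_
  rw [diag_apply, mul_apply, ofReal_sum]
  refine Finset.sum_congr rfl fun j _ => ?_
  rw [of_apply, conjTranspose_apply, mul_assoc, star_def, mul_conj, eigenOverlap, ofReal_mul,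
    ofReal_pow]

lemma cfc_mul_cfc_eq_doubleOpIntegral (hA : A.IsHermitian) (hB : B.IsHermitian) (f g : ℝ → ℝ) :
    cfc f A * cfc g B = doubleOpIntegral hA hB (fun x y => f x * g y) := by
  rw [← mul_one (cfc f A), ← doubleOpIntegral_one hA hB, cfc_mul_doubleOpIntegral,
    doubleOpIntegral_mul_cfc]
  simp only [mul_one]

lemma mul_cfc_eq_doubleOpIntegral (hA : A.IsHermitian) (hB : B.IsHermitian) (g : ℝ → ℝ) :
    A * cfc g B = doubleOpIntegral hA hB (fun x y => x * g y) := by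
  simpa only [cfc_id' ℝ A hA.isSelfAdjoint] using
    cfc_mul_cfc_eq_doubleOpIntegral hA hB (fun x => x) g

lemma cfc_eq_doubleOpIntegral (hA : A.IsHermitian) (hB : B.IsHermitian) (f : ℝ → ℝ) :
    cfc f A = doubleOpIntegral hA hB (fun x _ => f x) := by
  simpa only [cfc_const_one ℝ B hB.isSelfAdjoint, mul_one] using
    cfc_mul_cfc_eq_doubleOpIntegral hA hB f (fun _ => 1)

lemma eq_doubleOpIntegral (hA : A.IsHermitian) (hB : B.IsHermitian) :
    A = doubleOpIntegral hA hB (fun x _ => x) := by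
  simpa only [cfc_id' ℝ A hA.isSelfAdjoint] using cfc_eq_doubleOpIntegral hA hB (fun x => x)

end DoubleOperatorIntegral

section TraceFormulas

variable {ι 𝕜 : Type*} [Fintype ι] [DecidableEq ι] [RCLike 𝕜] {A B M : Matrix ι ι 𝕜} {t : ℝ}

lemma trace_mul_cfc (hA : A.IsHermitian) (hM : M.IsHermitian) (f : ℝ → ℝ) :
    (A * cfc f M).trace = ((∑ p : ι × ι, hA.eigenvalues p.1 * eigenOverlap hA hM p *
      f (hM.eigenvalues p.2) : ℝ) : 𝕜) := by
  rw [mul_cfc_eq_doubleOpIntegral hA hM, trace_doubleOpIntegral]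
  simp only [mul_right_comm]

lemma sum_eigenvalues_mul_eigenOverlap (hA : A.IsHermitian) (hM : M.IsHermitian) :
    ∑ p : ι × ι, hA.eigenvalues p.1 * eigenOverlap hA hM p = re A.trace := by
  rw [← ofReal_re (K := 𝕜) (∑ p, _), ← trace_doubleOpIntegral hA hM (fun x _ => x),
    ← eq_doubleOpIntegral]

lemma cfc_inv_add_const (hM : M.PosSemidef) (ht : 0 < t) :
    cfc (fun x : ℝ => (x + t)⁻¹) M = (M + t • 1)⁻¹ := by
  have h_ne : ∀ x ∈ spectrum ℝ M, x + t ≠ 0 := by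
    rw [hM.1.spectrum_real_eq_range_eigenvalues]
    rintro _ ⟨i, rfl⟩
    exact (add_pos_of_nonneg_of_pos (hM.eigenvalues_nonneg i) ht).ne'
  rw [cfc_inv (fun x => x + t) M h_ne (ha := hM.1.isSelfAdjoint),
    cfc_add_const t (fun x => x) M (ha := hM.1.isSelfAdjoint), cfc_id' ℝ M hM.1.isSelfAdjoint,
    nonsing_inv_eq_ringInverse, Algebra.algebraMap_eq_smul_one]

lemma trace_mul_inv_add_smul_one (hA : A.IsHermitian) (hM : M.PosSemidef) (ht : 0 < t) :
    (A * (M + t • 1)⁻¹).trace = ((∑ p : ι × ι, hA.eigenvalues p.1 * eigenOverlap hA hM.1 p /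
      (hM.1.eigenvalues p.2 + t) : ℝ) : 𝕜) := by
  rw [← cfc_inv_add_const hM ht, trace_mul_cfc hA hM.1]
  simp only [div_eq_mul_inv]

/-- The Umegaki relative entropy `S(A|B)`, with values in `𝕜`. -/
def umegaki (A B : Matrix ι ι 𝕜) : 𝕜 :=
  (A * cfc Real.log A - A * cfc Real.log B).trace

lemma umegaki_eq_neg_sum (hA : A.PosDef) (hB : B.PosDef) :
    umegaki A B = ((-∑ p : ι × ι, hA.1.eigenvalues p.1 * eigenOverlap hA.1 hB.1 p *
      Real.log (hB.1.eigenvalues p.2 / hA.1.eigenvalues p.1) : ℝ) : 𝕜) := by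
  have h_log : cfc Real.log A = doubleOpIntegral hA.1 hB.1 (fun x _ => Real.log x) :=
    cfc_eq_doubleOpIntegral hA.1 hB.1 Real.log
  have h_mul_log : A * cfc Real.log A = doubleOpIntegral hA.1 hB.1 (fun x _ => x * Real.log x) := by
    simpa only [cfc_id' ℝ A hA.1.isSelfAdjoint, ← h_log] using
      cfc_mul_doubleOpIntegral hA.1 hB.1 (fun x => x) (fun x _ => Real.log x)
  rw [umegaki, trace_sub, h_mul_log, trace_doubleOpIntegral, trace_mul_cfc hA.1 hB.1, ← ofReal_sub,
    ← Finset.sum_sub_distrib, ← Finset.sum_neg_distrib]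
  refine congrArg _ (Finset.sum_congr rfl fun p _ => ?_)
  rw [Real.log_div (hB.eigenvalues_pos _).ne' (hA.eigenvalues_pos _).ne']
  ring

theorem exists_sylvester_trace_eq (hA : A.PosDef) (hB : B.PosDef) (ht : 0 < t) :
    ∃ X, X * B + t • (A * X) = A ∧
      (X * A).trace = ((∑ p : ι × ι, hA.1.eigenvalues p.1 * eigenOverlap hA.1 hB.1 p /
        (hB.1.eigenvalues p.2 / hA.1.eigenvalues p.1 + t) : ℝ) : 𝕜) := by
  have mul_integral (F) : A * doubleOpIntegral hA.1 hB.1 F =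
      doubleOpIntegral hA.1 hB.1 (fun x y => x * F x y) := by
    simpa only [cfc_id' ℝ A hA.1.isSelfAdjoint] using
      cfc_mul_doubleOpIntegral hA.1 hB.1 (fun x => x) F
  have integral_mul (F) : doubleOpIntegral hA.1 hB.1 F * B =
      doubleOpIntegral hA.1 hB.1 (fun x y => F x y * y) := by
    simpa only [cfc_id' ℝ B hB.1.isSelfAdjoint] using
      doubleOpIntegral_mul_cfc hA.1 hB.1 F (fun y => y)
  refine ⟨doubleOpIntegral hA.1 hB.1 (fun x y => x / (y + t * x)), ?_, ?_⟩
  · conv_rhs => rw [eq_doubleOpIntegral hA.1 hB.1]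
    rw [integral_mul, mul_integral, ← doubleOpIntegral_const_mul, ← doubleOpIntegral_add]
    refine doubleOpIntegral_congr hA.1 hB.1 fun i j => ?_
    have hα := hA.eigenvalues_pos i
    have hβ := hB.eigenvalues_pos j
    field_simp
  · rw [trace_mul_comm, mul_integral, trace_doubleOpIntegral]
    refine congrArg _ (Finset.sum_congr rfl fun p _ => ?_)
    have hα := hA.eigenvalues_pos p.1
    have hβ := hB.eigenvalues_pos p.2
    field_simp

end TraceFormulas

section ResolventForm

variable {ι κ 𝕜 : Type*} [Fintype ι] [Fintype κ] [RCLike 𝕜]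

lemma re_trace_conjTranspose (M : Matrix ι ι 𝕜) : re Mᴴ.trace = re M.trace := by
  rw [trace_conjTranspose, star_def, conj_re]

/-- Expand `0 ≤ Tr((X - Y) M (X - Y)ᴴ)`. -/
lemma two_mul_re_trace_mul_mul_conjTranspose_le {M : Matrix κ κ 𝕜} (hM : M.PosSemidef)
    (X Y : Matrix ι κ 𝕜) :
    2 * re (X * M * Yᴴ).trace ≤ re (X * M * Xᴴ).trace + re (Y * M * Yᴴ).trace := by
  have h_nonneg : 0 ≤ re ((X - Y) * M * (X - Y)ᴴ).trace :=
    (nonneg_iff.1 (hM.mul_mul_conjTranspose_same (X - Y)).trace_nonneg).1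
  have h_symm : re (Y * M * Xᴴ).trace = re (X * M * Yᴴ).trace := by
    rw [← re_trace_conjTranspose]
    simp only [conjTranspose_mul, conjTranspose_conjTranspose, hM.1.eq, Matrix.mul_assoc]
  simp only [conjTranspose_sub, Matrix.sub_mul, Matrix.mul_sub, trace_sub, map_sub, h_symm]
    at h_nonneg
  linarith

/-- The concave quadratic form `Y ↦ 2 Re⟨A, Y⟩ - ⟨Y, T Y⟩` of the superoperator
`T Y = Y B + t A Y` for the Hilbert–Schmidt inner product. Its maximum `⟨A, T⁻¹ A⟩` is the resolvent
of the relative modular operator `Y ↦ A⁻¹ Y B` at `-t`, evaluated in the vector `A^(1/2)`. -/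
def resolventForm (A B : Matrix ι ι 𝕜) (t : ℝ) (Y : Matrix ι ι 𝕜) : ℝ :=
  2 * re (Y * A).trace - re (Y * B * Yᴴ).trace - t * re (Yᴴ * A * Y).trace

variable {A B G X : Matrix ι ι 𝕜} {t : ℝ}

lemma re_trace_mul_eq_of_sylvester (hA : A.IsHermitian) (hX : X * B + t • (A * X) = A)
    (Y : Matrix ι ι 𝕜) :
    re (X * B * Yᴴ).trace + t * re (Xᴴ * A * Y).trace = re (Y * A).trace := by
  have h_swap : re (Xᴴ * A * Y).trace = re (A * X * Yᴴ).trace := by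
    rw [← re_trace_conjTranspose]
    simp only [conjTranspose_mul, conjTranspose_conjTranspose, hA.eq]
    rw [trace_mul_comm]
  have h_adjoint : re (Y * A).trace = re (A * Yᴴ).trace := by
    rw [← re_trace_conjTranspose, conjTranspose_mul, hA.eq]
  rw [h_swap, h_adjoint, ← smul_re, ← trace_smul, ← map_add, ← trace_add, ← smul_mul_assoc,
    ← add_mul, hX]

lemma resolventForm_eq_of_sylvester (hA : A.IsHermitian) (hX : X * B + t • (A * X) = A) :
    resolventForm A B t X = re (X * A).trace := by
  rw [resolventForm]
  linarith [re_trace_mul_eq_of_sylvester hA hX X]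

lemma resolventForm_le_of_sylvester (hA : A.PosSemidef) (hB : B.PosSemidef) (ht : 0 ≤ t)
    (hX : X * B + t • (A * X) = A) (Y : Matrix ι ι 𝕜) :
    resolventForm A B t Y ≤ re (X * A).trace := by
  have hB_le := two_mul_re_trace_mul_mul_conjTranspose_le hB X Y
  have hA_le := two_mul_re_trace_mul_mul_conjTranspose_le hA Xᴴ Yᴴ
  simp only [conjTranspose_conjTranspose] at hA_le
  rw [resolventForm]
  linarith [mul_le_mul_of_nonneg_left hA_le ht, re_trace_mul_eq_of_sylvester hA.1 hX X,
    re_trace_mul_eq_of_sylvester hA.1 hX Y]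

variable [DecidableEq ι]

lemma isHermitian_inv_add_smul_one {M : Matrix ι ι 𝕜} (hM : M.IsHermitian) (t : ℝ) :
    (M + t • 1)⁻¹.IsHermitian :=
  (hM.add (isHermitian_one.smul (IsSelfAdjoint.all t))).inv

lemma mul_inv_add_smul_one {M : Matrix ι ι 𝕜} (hM : M.PosSemidef) (ht : 0 < t) :
    M * (M + t • 1)⁻¹ + t • (M + t • 1)⁻¹ = 1 := by
  have h_unit : IsUnit (M + t • (1 : Matrix ι ι 𝕜)) :=
    (PosDef.posSemidef_add hM (PosDef.one.smul ht)).isUnit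
  rw [← smul_one_mul t (M + t • 1)⁻¹, ← add_mul,
    mul_nonsing_inv _ ((isUnit_iff_isUnit_det _).1 h_unit)]

lemma resolventForm_inv_sq_add_smul_one (A : Matrix ι ι 𝕜) (hG : G.IsHermitian) (ht : 0 < t) :
    resolventForm A (G * A * G) t (G ^ 2 + t • 1)⁻¹ = re (A * (G ^ 2 + t • 1)⁻¹).trace := by
  have h_sq : (G ^ 2).PosSemidef := by
    simpa only [hG.eq, ← pow_two] using posSemidef_conjTranspose_mul_self G
  have h_comm : Commute G (G ^ 2 + t • 1)⁻¹ := by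
    rw [← Matrix.zpow_neg_one]
    exact Matrix.Commute.zpow_right
      (((Commute.refl G).pow_right 2).add_right ((Commute.one_right G).smul_right t)) (-1)
  have h_inv := mul_inv_add_smul_one h_sq ht
  have h_herm := (isHermitian_inv_add_smul_one h_sq.1 t).eq
  set R := (G ^ 2 + t • (1 : Matrix ι ι 𝕜))⁻¹
  have h_cycle : (R * (G * A * G) * R).trace = (A * (G ^ 2 * R * R)).trace := by
    calc (R * (G * A * G) * R).trace = (R * G * (A * (G * R))).trace := by simp only [mul_assoc]
      _ = (A * (G * R) * (R * G)).trace := trace_mul_comm _ _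
      _ = (A * (G ^ 2 * R * R)).trace := by
        simp only [← h_comm.eq, pow_two, mul_assoc, h_comm.left_comm]
  have h_resolvent : A * (G ^ 2 * R * R) + t • (A * (R * R)) = A * R := by
    rw [← mul_smul_comm, ← mul_add, ← smul_mul_assoc, ← add_mul, h_inv, one_mul]
  have h_form : re (R * (G * A * G) * R).trace + t * re (R * A * R).trace = re (A * R).trace := by
    rw [h_cycle, mul_assoc R A, trace_mul_comm R (A * R), mul_assoc A, ← smul_re,
      ← trace_smul, ← map_add, ← trace_add, h_resolvent]
  rw [resolventForm, h_herm, trace_mul_comm R A]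
  linarith

end ResolventForm

section ResolventFormCongr

variable {ι κ 𝕜 : Type*} [Fintype κ] [DecidableEq κ] [RCLike 𝕜] {C : Matrix κ κ 𝕜} {t : ℝ}

lemma mul_conjTranspose_mul_inv_add_smul_one (hC : C.PosSemidef) (ht : 0 < t)
    (Z K : Matrix ι κ 𝕜) :
    Z * C * (K * (C + t • 1)⁻¹)ᴴ + t • (Z * (K * (C + t • 1)⁻¹)ᴴ) = Z * Kᴴ := by
  have h_inv := mul_inv_add_smul_one hC ht
  rw [conjTranspose_mul, (isHermitian_inv_add_smul_one hC.1 t).eq]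
  set R := (C + t • (1 : Matrix κ κ 𝕜))⁻¹
  calc Z * C * (R * Kᴴ) + t • (Z * (R * Kᴴ)) = Z * ((C * R + t • R) * Kᴴ) := by
        simp only [Matrix.mul_assoc, Matrix.mul_add, Matrix.add_mul, Matrix.mul_smul,
          Matrix.smul_mul]
    _ = Z * Kᴴ := by rw [h_inv, Matrix.one_mul]

/-- Complete the squares at `Y K = K (C + t)⁻¹` and `Yᴴ K = K (C + t)⁻¹`. -/
theorem resolventForm_congr_le [Fintype ι] (K : Matrix ι κ 𝕜) (hC : C.PosSemidef) (ht : 0 < t)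
    (Y : Matrix ι ι 𝕜) :
    resolventForm (K * Kᴴ) (K * C * Kᴴ) t Y ≤ re (Kᴴ * K * (C + t • 1)⁻¹).trace := by
  have h_inner (Z : Matrix ι κ 𝕜) : re (Z * C * (K * (C + t • 1)⁻¹)ᴴ).trace +
      t * re (Z * (K * (C + t • 1)⁻¹)ᴴ).trace = re (Z * Kᴴ).trace := by
    rw [← smul_re, ← trace_smul, ← map_add, ← trace_add,
      mul_conjTranspose_mul_inv_add_smul_one hC ht]
  have h_herm := (isHermitian_inv_add_smul_one hC.1 t).eq
  set R := (C + t • (1 : Matrix κ κ 𝕜))⁻¹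
  have h_square_B := two_mul_re_trace_mul_mul_conjTranspose_le hC (Y * K) (K * R)
  have h_square_A := two_mul_re_trace_mul_mul_conjTranspose_le (PosSemidef.one (n := κ) (R := 𝕜))
    (Yᴴ * K) (K * R)
  simp only [Matrix.mul_one] at h_square_A
  have h_adjoint : re (Yᴴ * K * (K * R)ᴴ).trace = re (Y * K * (K * R)ᴴ).trace := by
    rw [← re_trace_conjTranspose, Matrix.mul_assoc Y, trace_mul_comm Y]
    simp only [conjTranspose_mul, conjTranspose_conjTranspose, h_herm, Matrix.mul_assoc]
  have h_max : re (K * R * Kᴴ).trace = re (Kᴴ * K * R).trace := by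
    rw [trace_mul_comm, ← Matrix.mul_assoc]
  have h_linear : Y * K * Kᴴ = Y * (K * Kᴴ) := Matrix.mul_assoc ..
  have h_B : Y * K * C * (Y * K)ᴴ = Y * (K * C * Kᴴ) * Yᴴ := by
    simp only [conjTranspose_mul, Matrix.mul_assoc]
  have h_A : Yᴴ * K * (Yᴴ * K)ᴴ = Yᴴ * (K * Kᴴ) * Y := by
    simp only [conjTranspose_mul, conjTranspose_conjTranspose, Matrix.mul_assoc]
  rw [h_B] at h_square_B
  rw [h_A, h_adjoint] at h_square_A
  rw [resolventForm, ← h_linear, ← h_max]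
  linarith [mul_le_mul_of_nonneg_left h_square_A ht.le, h_inner (Y * K), h_inner (K * R)]

end ResolventFormCongr

section EntropyBounds

variable {ι κ 𝕜 : Type*} [Fintype κ] [RCLike 𝕜] {K : Matrix ι κ 𝕜} {C : Matrix κ κ 𝕜}

lemma posDef_mul_mul_conjTranspose [Finite ι] (hK : (K * Kᴴ).PosDef) (hC : C.PosDef) :
    (K * C * Kᴴ).PosDef := by
  classical
  have := Fintype.ofFinite ι
  refine hC.mul_mul_conjTranspose_same fun x y hxy => ?_
  refine vecMul_injective_of_isUnit hK.isUnit ?_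
  simpa only [vecMul_vecMul] using congrArg (· ᵥ* Kᴴ) hxy

variable [Fintype ι] [DecidableEq ι] {A B G : Matrix ι ι 𝕜}

lemma posDef_sq_of_posDef_mul_mul_self (hG : G.IsHermitian) (hB : (G * A * G).PosDef) :
    (G ^ 2).PosDef := by
  have h_unit : IsUnit G := isUnit_of_mul_isUnit_right hB.isUnit
  simpa only [pow_two, Matrix.star_eq_conjTranspose, hG.eq, mul_one] using
    (Matrix.IsUnit.posDef_star_right_conjugate_iff h_unit).2 PosDef.one

theorem neg_trace_mul_log_sq_le_umegaki (hA : A.PosDef) (hG : G.IsHermitian)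
    (hB : (G * A * G).PosDef) :
    -(A * cfc Real.log (G ^ 2)).trace ≤ umegaki A (G * A * G) := by
  have h_sq := posDef_sq_of_posDef_mul_mul_self hG hB
  rw [umegaki_eq_neg_sum hA hB, trace_mul_cfc hA.1 h_sq.1, ← ofReal_neg, ofReal_le_ofReal]
  refine neg_le_neg (sum_mul_log_le_of_sum_div_add_le (fun p => h_sq.eigenvalues_pos p.2)
    (fun p => div_pos (hB.eigenvalues_pos p.2) (hA.eigenvalues_pos p.1)) ?_ fun t ht => ?_)
  · rw [sum_eigenvalues_mul_eigenOverlap, sum_eigenvalues_mul_eigenOverlap]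
  · obtain ⟨X, hX, h_trace⟩ := exists_sylvester_trace_eq hA hB ht
    have h_le := resolventForm_le_of_sylvester hA.posSemidef hB.posSemidef ht.le hX
      (G ^ 2 + t • 1)⁻¹
    rwa [resolventForm_inv_sq_add_smul_one A hG ht,
      trace_mul_inv_add_smul_one hA.1 h_sq.posSemidef ht, h_trace, ofReal_re, ofReal_re] at h_le

theorem umegaki_le_neg_trace_mul_log [DecidableEq κ] (hK : (K * Kᴴ).PosDef) (hC : C.PosDef) :
    umegaki (K * Kᴴ) (K * C * Kᴴ) ≤ -(Kᴴ * K * cfc Real.log C).trace := by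
  have hB := posDef_mul_mul_conjTranspose hK hC
  have h_gram : (Kᴴ * K).IsHermitian := isHermitian_conjTranspose_mul_self K
  rw [umegaki_eq_neg_sum hK hB, trace_mul_cfc h_gram hC.1, ← ofReal_neg, ofReal_le_ofReal]
  refine neg_le_neg (sum_mul_log_le_of_sum_div_add_le
    (fun p => div_pos (hB.eigenvalues_pos p.2) (hK.eigenvalues_pos p.1))
    (fun p => hC.eigenvalues_pos p.2) ?_ fun t ht => ?_)
  · rw [sum_eigenvalues_mul_eigenOverlap, sum_eigenvalues_mul_eigenOverlap, trace_mul_comm]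
  · obtain ⟨X, hX, h_trace⟩ := exists_sylvester_trace_eq hK hB ht
    have h_le := resolventForm_congr_le K hC.posSemidef ht X
    rwa [resolventForm_eq_of_sylvester hK.1 hX,
      trace_mul_inv_add_smul_one h_gram hC.posSemidef ht, h_trace, ofReal_re, ofReal_re] at h_le

theorem stmt_19_general [DecidableEq κ] (hA : A.PosDef) (hC : C.PosDef) (hG : G.IsHermitian)
    (hGAG : G * A * G = B) (hKK : K * Kᴴ = A) (hKCK : K * C * Kᴴ = B) :
    -(A * cfc Real.log (G ^ 2)).trace ≤ umegaki A B ∧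
      umegaki A B ≤ -(Kᴴ * K * cfc Real.log C).trace := by
  subst hKK
  refine ⟨?_, hKCK ▸ umegaki_le_neg_trace_mul_log hA hC⟩
  have hB : (G * (K * Kᴴ) * G).PosDef := by
    rw [hGAG, ← hKCK]
    exact posDef_mul_mul_conjTranspose hA hC
  exact hGAG ▸ neg_trace_mul_log_sq_le_umegaki hA hG hB

end EntropyBounds

section MatrixPowers

variable {A B : Matrix (Fin n) (Fin n) ℂ}

lemma isHermitian_mPow (A : Matrix (Fin n) (Fin n) ℂ) (s : ℝ) : (mPow A s).IsHermitian :=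
  cfc_predicate (fun x : ℝ => x ^ s) A

lemma mPow_mul_mPow (hA : A.PosDef) (s t : ℝ) : mPow A s * mPow A t = mPow A (s + t) := by
  have h_cont (f : ℝ → ℝ) : ContinuousOn f (spectrum ℝ A) := A.finite_real_spectrum.continuousOn f
  rw [mPow, mPow, mPow, ← cfc_mul _ _ A (h_cont _) (h_cont _)]
  refine cfc_congr fun x hx => ?_
  rw [hA.1.spectrum_real_eq_range_eigenvalues] at hx
  obtain ⟨i, rfl⟩ := hx
  exact (Real.rpow_add (hA.eigenvalues_pos i) s t).symm

lemma mPow_zero (hA : A.IsHermitian) : mPow A 0 = 1 := by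
  simpa only [mPow, Real.rpow_zero] using cfc_const_one ℝ A hA.isSelfAdjoint

lemma mPow_one (hA : A.IsHermitian) : mPow A 1 = A := by
  simpa only [mPow, Real.rpow_one] using cfc_id' ℝ A hA.isSelfAdjoint

lemma mPow_neg_one (hA : A.PosDef) : mPow A (-1) = A⁻¹ := by
  refine (inv_eq_right_inv ?_).symm
  nth_rw 1 [← mPow_one hA.1]
  rw [mPow_mul_mPow hA, add_neg_cancel, mPow_zero hA.1]

lemma mPow_half_mul_mPow_half (hA : A.PosDef) : mPow A (1/2) * mPow A (1/2) = A := by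
  rw [mPow_mul_mPow hA, add_halves, mPow_one hA.1]

lemma mPow_half_mul_conjTranspose (hA : A.PosDef) : mPow A (1/2) * (mPow A (1/2))ᴴ = A := by
  rw [isHermitian_mPow, mPow_half_mul_mPow_half hA]

lemma conjTranspose_mul_mPow_half (hA : A.PosDef) : (mPow A (1/2))ᴴ * mPow A (1/2) = A := by
  rw [isHermitian_mPow, mPow_half_mul_mPow_half hA]

lemma mPow_neg_half_mul_mPow_half (hA : A.PosDef) : mPow A (-(1/2)) * mPow A (1/2) = 1 := by
  rw [mPow_mul_mPow hA, neg_add_cancel, mPow_zero hA.1]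

lemma mPow_half_mul_mPow_neg_half (hA : A.PosDef) : mPow A (1/2) * mPow A (-(1/2)) = 1 := by
  rw [mPow_mul_mPow hA, add_neg_cancel, mPow_zero hA.1]

lemma posDef_mPow_neg_half_mul_mul (hA : A.PosDef) (hB : B.PosDef) :
    (mPow A (-(1/2)) * B * mPow A (-(1/2))).PosDef := by
  have h_unit : IsUnit (mPow A (-(1/2))) :=
    IsUnit.of_mul_eq_one _ (mPow_neg_half_mul_mPow_half hA)
  simpa only [star_eq_conjTranspose, (isHermitian_mPow A _).eq] using
    (Matrix.IsUnit.posDef_star_right_conjugate_iff h_unit).2 hB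

lemma mPow_half_mul_conj_neg_half_mul (hA : A.PosDef) (B : Matrix (Fin n) (Fin n) ℂ) :
    mPow A (1/2) * (mPow A (-(1/2)) * B * mPow A (-(1/2))) * mPow A (1/2) = B := by
  calc _ = (mPow A (1/2) * mPow A (-(1/2))) * B * (mPow A (-(1/2)) * mPow A (1/2)) := by
        simp only [mul_assoc]
    _ = B := by
        rw [mPow_half_mul_mPow_neg_half hA, mPow_neg_half_mul_mPow_half hA, one_mul, mul_one]

lemma isHermitian_mGeo (A B : Matrix (Fin n) (Fin n) ℂ) (t : ℝ) : (mGeo A B t).IsHermitian := by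
  simpa only [mGeo, (isHermitian_mPow A _).eq] using
    isHermitian_mul_mul_conjTranspose (mPow A (1/2))
      (isHermitian_mPow (mPow A (-(1/2)) * B * mPow A (-(1/2))) t)

/-- The Riccati equation `G A⁻¹ G = B` characterizing the geometric mean. -/
lemma mGeo_mul_inv_mul_mGeo (hA : A.PosDef) (hB : B.PosDef) :
    mGeo A B (1/2) * A⁻¹ * mGeo A B (1/2) = B := by
  have h_cancel : mPow A (1/2) * A⁻¹ * mPow A (1/2) = 1 := by
    rw [← mPow_neg_one hA, mPow_mul_mPow hA, mPow_mul_mPow hA, ← mPow_zero hA.1]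
    norm_num
  have h_root := mPow_half_mul_mPow_half (posDef_mPow_neg_half_mul_mul hA hB)
  rw [mGeo]
  set P := mPow A (1/2)
  set C := mPow A (-(1/2)) * B * mPow A (-(1/2)) with hC
  calc P * mPow C (1/2) * P * A⁻¹ * (P * mPow C (1/2) * P)
      = P * mPow C (1/2) * (P * A⁻¹ * P) * mPow C (1/2) * P := by simp only [mul_assoc]
    _ = P * (mPow C (1/2) * mPow C (1/2)) * P := by rw [h_cancel, mul_one, mul_assoc P]
    _ = B := by rw [h_root, hC, mPow_half_mul_conj_neg_half_mul hA]

end MatrixPowers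

/-- Corollary 4.12: for positive definite matrices `A, B`,
`-Tr[A log((A⁻¹ ♯ B)²)] ≤ S(A|B) ≤ -Tr[A log(A^(-1/2) B A^(-1/2))]`,
where `S(A|B) = Tr(A log A - A log B)` is the Umegaki relative entropy. -/
theorem stmt_19 (A B : Matrix (Fin n) (Fin n) ℂ) (hA : A.PosDef) (hB : B.PosDef) :
    -(A * mLog ((mGeo A⁻¹ B (1/2)) ^ 2)).trace ≤ (A * mLog A - A * mLog B).trace ∧
      (A * mLog A - A * mLog B).trace ≤
        -(A * mLog (mPow A (-(1/2)) * B * mPow A (-(1/2)))).trace := by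
  have h_riccati : mGeo A⁻¹ B (1/2) * A * mGeo A⁻¹ B (1/2) = B := by
    simpa only [nonsing_inv_nonsing_inv A ((isUnit_iff_isUnit_det A).1 hA.isUnit)] using
      mGeo_mul_inv_mul_mGeo hA.inv hB
  have h_congr : mPow A (1/2) * (mPow A (-(1/2)) * B * mPow A (-(1/2))) * (mPow A (1/2))ᴴ = B := by
    rw [isHermitian_mPow, mPow_half_mul_conj_neg_half_mul hA]
  simpa only [umegaki, mLog, conjTranspose_mul_mPow_half hA] using stmt_19_general hA
    (posDef_mPow_neg_half_mul_mul hA hB) (isHermitian_mGeo _ _ _) h_riccati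
    (mPow_half_mul_conjTranspose hA) h_congr
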